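/- Fix d ≥ 1, 0 ≤ r ≤ d−1 and n ≥ 3, and set K = K_d(n). Define the subgroups H_r = K ∩ P_r(ℚ)Q_r(𝔸_f), H_{ℓ,r} = K ∩ L_{ℓ,r}(ℚ)N_r(𝔸_f), K_{Q,r} = K ∩ Q_r(𝔸_f) and K_{N,r} = K ∩ N_r(𝔸_f) of GSp_{2d}(𝔸_f). Then: (a) H_r = H_{ℓ,r}·K_{Q,r}; (b) K_{N,r} is a normal subgroup of H_r and the quotient H_r/K_{N,r} is isomorphic to the direct product Γ_{ℓ,r} × K_r, where Γ_{ℓ,r} = Ker(GL_{d−r}(ℤ) → GL_{d−r}(ℤ/nℤ)) (identified with a subgroup of L_{ℓ,r}(ℚ) via A ↦ blockdiag(A, I_{2r}, J_{d−r}·(ᵗA)^{−1}·J_{d−r})) and K_r = Ker(GSp_{2r}(Ẑ) → GSp_{2r}(ℤ/nℤ)). -/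

import Mathlib

open Matrix
open scoped TensorProduct

noncomputable section

/-- The profinite completion `Ẑ` of `ℤ`, as the inverse limit of the rings `ℤ/nℤ`. -/
def ZHat : Subring (∀ n : ℕ+, ZMod (n : ℕ)) where
  carrier := {x | ∀ (m k : ℕ+) (h : (m : ℕ) ∣ (k : ℕ)), ZMod.castHom h (ZMod (m : ℕ)) (x k) = x m}
  zero_mem' := by intro m k h; simp only [Pi.zero_apply, _root_.map_zero]
  one_mem' := by intro m k h; simp only [Pi.one_apply, _root_.map_one]
  add_mem' := by intro a b ha hb m k h; simp only [Pi.add_apply, _root_.map_add, ha m k h, hb m k h]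
  mul_mem' := by intro a b ha hb m k h; simp only [Pi.mul_apply, _root_.map_mul, ha m k h, hb m k h]
  neg_mem' := by intro a ha m k h; simp only [Pi.neg_apply, _root_.map_neg, ha m k h]

/-- Reduction modulo `n`, as a ring homomorphism `Ẑ → ℤ/nℤ`. -/
def projZHat (n : ℕ+) : ↥ZHat →+* ZMod (n : ℕ) :=
  (Pi.evalRingHom (fun k : ℕ+ => ZMod (k : ℕ)) n).comp ZHat.subtype

/-- The ring of finite adeles of `ℚ`, presented as `Ẑ ⊗_ℤ ℚ`. -/
abbrev AQf : Type := ↥ZHat ⊗[ℤ] ℚ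

/-- The inclusion `Ẑ → 𝔸_f`. -/
def zhatToA : ↥ZHat →+* AQf := Algebra.TensorProduct.includeLeftRingHom

/-- The diagonal inclusion `ℚ → 𝔸_f`. -/
def ratToA : ℚ →+* AQf := (Algebra.TensorProduct.includeRight).toRingHom

/-- Functoriality of `GL_m` in the ring. -/
def glMap {m : ℕ} {R S : Type*} [CommRing R] [CommRing S] (f : R →+* S) :
    GL (Fin m) R →* GL (Fin m) S :=
  Units.map (f.mapMatrix : Matrix (Fin m) (Fin m) R →+* Matrix (Fin m) (Fin m) S).toMonoidHom

/-- The `d × d` antidiagonal matrix `J_d`. -/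
def Jmat (d : ℕ) (R : Type*) [CommRing R] : Matrix (Fin d) (Fin d) R :=
  Matrix.of fun i j => if (i : ℕ) + (j : ℕ) + 1 = d then 1 else 0

/-- The standard symplectic similitude form `J_{d,d} = [[0, J_d], [-J_d, 0]]`. -/
def Jsymp (d : ℕ) (R : Type*) [CommRing R] : Matrix (Fin (2 * d)) (Fin (2 * d)) R :=
  Matrix.of fun i j =>
    if (i : ℕ) + (j : ℕ) + 1 = 2 * d then (if (i : ℕ) < d then 1 else -1) else 0

private lemma conj_aux {n : ℕ} {R : Type*} [CommRing R]
    (A B J : Matrix (Fin n) (Fin n) R) :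
    Bᵀ * (Aᵀ * J * A) * B = (A * B)ᵀ * J * (A * B) := by
  simp only [Matrix.transpose_mul, Matrix.mul_assoc]

/-- The symplectic similitude group `GSp_{2d}(R)`, with the similitude factor recorded:
pairs `(g, c)` with `ᵗg · J_{d,d} · g = c · J_{d,d}`.  For `d ≥ 1` the similitude `c` is
uniquely determined by `g`. -/
def GSpP (d : ℕ) (R : Type*) [CommRing R] : Subgroup (GL (Fin (2 * d)) R × Rˣ) where
  carrier := {x | ((x.1 : Matrix (Fin (2 * d)) (Fin (2 * d)) R))ᵀ * Jsymp d R *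
      (x.1 : Matrix (Fin (2 * d)) (Fin (2 * d)) R) = ((x.2 : Rˣ) : R) • Jsymp d R}
  one_mem' := by
    simp only [Set.mem_setOf_eq, Prod.fst_one, Prod.snd_one, Units.val_one, one_smul]
    simp
  mul_mem' := by
    intro a b ha hb
    simp only [Set.mem_setOf_eq] at ha hb ⊢
    have h1 : ((a * b).1 : Matrix (Fin (2 * d)) (Fin (2 * d)) R)
        = (a.1 : Matrix (Fin (2 * d)) (Fin (2 * d)) R) *
          (b.1 : Matrix (Fin (2 * d)) (Fin (2 * d)) R) := rfl
    have h2 : (((a * b).2 : Rˣ) : R) = ((a.2 : Rˣ) : R) * ((b.2 : Rˣ) : R) := rfl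
    rw [h1, h2, ← conj_aux, ha, Matrix.mul_smul, Matrix.smul_mul, hb, smul_smul]
  inv_mem' := by
    intro a ha
    simp only [Set.mem_setOf_eq] at ha ⊢
    have h1 : ((a⁻¹).1 : Matrix (Fin (2 * d)) (Fin (2 * d)) R)
        = (((a.1)⁻¹ : GL (Fin (2 * d)) R) : Matrix (Fin (2 * d)) (Fin (2 * d)) R) := rfl
    have h2 : (((a⁻¹).2 : Rˣ) : R) = (((a.2)⁻¹ : Rˣ) : R) := rfl
    have hJ : Jsymp d R = (((a.2)⁻¹ : Rˣ) : R) •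
        ((a.1 : Matrix (Fin (2 * d)) (Fin (2 * d)) R)ᵀ * Jsymp d R *
          (a.1 : Matrix (Fin (2 * d)) (Fin (2 * d)) R)) := by
      rw [ha, smul_smul, ← Units.val_mul, inv_mul_cancel, Units.val_one, one_smul]
    rw [h1, h2]
    conv_lhs => rw [hJ]
    rw [Matrix.mul_smul, Matrix.smul_mul, conj_aux, Units.mul_inv]
    simp

/-- The symplectic similitude group `GSp_{2d}(R)` as a matrix group. -/
def GSp (d : ℕ) (R : Type*) [CommRing R] : Subgroup (GL (Fin (2 * d)) R) :=
  (GSpP d R).map (MonoidHom.fst _ _)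

/-- Index of the block (of sizes `d-r`, `2r`, `d-r`) that the `i`-th coordinate belongs to. -/
def blk (d r : ℕ) (i : ℕ) : ℕ := if i < d - r then 0 else if i < d + r then 1 else 2

/-- The standard maximal parabolic subgroup `P_r` of `GSp_{2d}`:
elements of `GSp_{2d}` that are block upper triangular for the partition `(d-r, 2r, d-r)`. -/
def PrSet (d r : ℕ) (R : Type*) [CommRing R] : Set (GL (Fin (2 * d)) R) :=
  {g | g ∈ GSp d R ∧
    ∀ i j : Fin (2 * d), blk d r (j : ℕ) < blk d r (i : ℕ) →
      (g : Matrix (Fin (2 * d)) (Fin (2 * d)) R) i j = 0}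

/-- The unipotent radical `N_r` of `P_r`: block upper triangular elements of `GSp_{2d}`
whose diagonal blocks are identity matrices. -/
def NrSet (d r : ℕ) (R : Type*) [CommRing R] : Set (GL (Fin (2 * d)) R) :=
  {g | g ∈ GSp d R ∧
    (∀ i j : Fin (2 * d), blk d r (j : ℕ) < blk d r (i : ℕ) →
      (g : Matrix (Fin (2 * d)) (Fin (2 * d)) R) i j = 0) ∧
    (∀ i j : Fin (2 * d), blk d r (i : ℕ) = blk d r (j : ℕ) →
      (g : Matrix (Fin (2 * d)) (Fin (2 * d)) R) i j = if i = j then 1 else 0)}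

/-- The subgroup `Q_r` of `P_r`: block upper triangular elements of `GSp_{2d}` with
last diagonal block the identity and first diagonal block the similitude times the identity. -/
def QrSet (d r : ℕ) (R : Type*) [CommRing R] : Set (GL (Fin (2 * d)) R) :=
  {g | ∃ c : Rˣ,
    (g : Matrix (Fin (2 * d)) (Fin (2 * d)) R)ᵀ * Jsymp d R *
      (g : Matrix (Fin (2 * d)) (Fin (2 * d)) R) = (c : R) • Jsymp d R ∧
    (∀ i j : Fin (2 * d), blk d r (j : ℕ) < blk d r (i : ℕ) →
      (g : Matrix (Fin (2 * d)) (Fin (2 * d)) R) i j = 0) ∧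
    (∀ i j : Fin (2 * d), blk d r (i : ℕ) = 0 → blk d r (j : ℕ) = 0 →
      (g : Matrix (Fin (2 * d)) (Fin (2 * d)) R) i j = if i = j then (c : R) else 0) ∧
    (∀ i j : Fin (2 * d), blk d r (i : ℕ) = 2 → blk d r (j : ℕ) = 2 →
      (g : Matrix (Fin (2 * d)) (Fin (2 * d)) R) i j = if i = j then 1 else 0)}

/-- The linear part `L_{ℓ,r}` of the Levi quotient of `P_r`: block diagonal symplectic
(similitude `1`) matrices with middle block the identity. -/
def LlrSet (d r : ℕ) (R : Type*) [CommRing R] : Set (GL (Fin (2 * d)) R) :=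
  {g | (g : Matrix (Fin (2 * d)) (Fin (2 * d)) R)ᵀ * Jsymp d R *
      (g : Matrix (Fin (2 * d)) (Fin (2 * d)) R) = Jsymp d R ∧
    (∀ i j : Fin (2 * d), blk d r (i : ℕ) ≠ blk d r (j : ℕ) →
      (g : Matrix (Fin (2 * d)) (Fin (2 * d)) R) i j = 0) ∧
    (∀ i j : Fin (2 * d), blk d r (i : ℕ) = 1 → blk d r (j : ℕ) = 1 →
      (g : Matrix (Fin (2 * d)) (Fin (2 * d)) R) i j = if i = j then 1 else 0)}

/-- `P_r(ℚ)`, viewed inside `GL_{2d}(𝔸_f)`. -/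
def PrQinA (d r : ℕ) : Set (GL (Fin (2 * d)) AQf) := (glMap ratToA) '' (PrSet d r ℚ)

/-- `L_{ℓ,r}(ℚ)`, viewed inside `GL_{2d}(𝔸_f)`. -/
def LlrQinA (d r : ℕ) : Set (GL (Fin (2 * d)) AQf) := (glMap ratToA) '' (LlrSet d r ℚ)

/-- `GSp_{2d}(Ẑ)`, viewed inside `GL_{2d}(𝔸_f)`. -/
def GSpZinA (d : ℕ) : Subgroup (GL (Fin (2 * d)) AQf) := (GSp d ↥ZHat).map (glMap zhatToA)

/-- The principal congruence subgroup `K_d(n) = Ker(GSp_{2d}(Ẑ) → GSp_{2d}(ℤ/nℤ))`. -/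
def KdZ (d : ℕ) (n : ℕ+) : Subgroup (GL (Fin (2 * d)) ↥ZHat) :=
  GSp d ↥ZHat ⊓ (glMap (projZHat n)).ker

/-- The principal congruence subgroup `K_d(n)`, viewed inside `GL_{2d}(𝔸_f)`. -/
def KdA (d : ℕ) (n : ℕ+) : Subgroup (GL (Fin (2 * d)) AQf) := (KdZ d n).map (glMap zhatToA)
set_option synthInstance.maxHeartbeats 2000000
set_option maxHeartbeats 2000000

/-- `H_r = K ∩ P_r(ℚ)Q_r(𝔸_f)`. -/
def HrSet (d r : ℕ) (n : ℕ+) : Set (GL (Fin (2 * d)) AQf) :=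
  {g | g ∈ KdA d n ∧ ∃ p ∈ PrQinA d r, ∃ q ∈ QrSet d r AQf, g = p * q}

/-- `H_{ℓ,r} = K ∩ L_{ℓ,r}(ℚ)N_r(𝔸_f)`. -/
def HlrSet (d r : ℕ) (n : ℕ+) : Set (GL (Fin (2 * d)) AQf) :=
  {g | g ∈ KdA d n ∧ ∃ p ∈ LlrQinA d r, ∃ u ∈ NrSet d r AQf, g = p * u}

/-- `K_{Q,r} = K ∩ Q_r(𝔸_f)`. -/
def KQrSet (d r : ℕ) (n : ℕ+) : Set (GL (Fin (2 * d)) AQf) :=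
  {g | g ∈ KdA d n ∧ g ∈ QrSet d r AQf}

/-- `K_{N,r} = K ∩ N_r(𝔸_f)`. -/
def KNrSet (d r : ℕ) (n : ℕ+) : Set (GL (Fin (2 * d)) AQf) :=
  {g | g ∈ KdA d n ∧ g ∈ NrSet d r AQf}

/-- `Γ_{ℓ,r} = Ker(GL_{d-r}(ℤ) → GL_{d-r}(ℤ/nℤ))`. -/
def GammaLr (m n : ℕ) : Subgroup (GL (Fin m) ℤ) := (glMap (Int.castRingHom (ZMod n))).ker

/-- `K_r = Ker(GSp_{2r}(Ẑ) → GSp_{2r}(ℤ/nℤ))` (with the similitude recorded, so that for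
`r = 0` this is the group of units of `Ẑ` congruent to `1` mod `n`). -/
def KrP (r : ℕ) (n : ℕ+) : Subgroup ↥(GSpP r ↥ZHat) :=
  (((glMap (projZHat n)).prodMap (Units.map (projZHat n).toMonoidHom)).comp
    (GSpP r ↥ZHat).subtype).ker

/-! ### Block indices -/

section Blocks

variable {d r : ℕ}

def i0 (d r : ℕ) (x : Fin (d - r)) : Fin (2 * d) := ⟨x, by omega⟩
def i1 (h : r < d) (x : Fin (2 * r)) : Fin (2 * d) := ⟨d - r + x, by omega⟩
def i2 (d r : ℕ) (x : Fin (d - r)) : Fin (2 * d) := ⟨d + r + x, by omega⟩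

lemma blk_i0 (x : Fin (d - r)) : blk d r (i0 d r x : ℕ) = 0 := by
  have := x.2
  simp [blk, i0]

lemma blk_i1 (h : r < d) (x : Fin (2 * r)) : blk d r (i1 h x : ℕ) = 1 := by
  have := x.2
  have h1 : ¬ (d - r + (x : ℕ) < d - r) := by omega
  have h2 : d - r + (x : ℕ) < d + r := by omega
  simp [blk, i1, h2]

lemma blk_i2 (x : Fin (d - r)) : blk d r (i2 d r x : ℕ) = 2 := by
  have := x.2
  have h1 : ¬ (d + r + (x : ℕ) < d - r) := by omega
  have h2 : ¬ (d + r + (x : ℕ) < d + r) := by omega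
  simp [blk, i2, h1]

lemma idx_cases (h : r < d) (i : Fin (2 * d)) :
    (∃ x, i0 d r x = i) ∨ (∃ x, i1 h x = i) ∨ (∃ x, i2 d r x = i) := by
  have hi := i.2
  by_cases h1 : (i : ℕ) < d - r
  · exact Or.inl ⟨⟨i, h1⟩, rfl⟩
  · by_cases h2 : (i : ℕ) < d + r
    · refine Or.inr (Or.inl ⟨⟨i - (d - r), by omega⟩, ?_⟩)
      apply Fin.ext
      simp only [i1]
      omega
    · refine Or.inr (Or.inr ⟨⟨i - (d + r), by omega⟩, ?_⟩)
      apply Fin.ext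
      simp only [i2]
      omega

lemma i0_inj : Function.Injective (i0 d r) := by
  intro x y hxy
  apply Fin.ext
  simpa [i0] using hxy

lemma i1_inj (h : r < d) : Function.Injective (i1 h) := by
  intro x y hxy
  apply Fin.ext
  simpa [i1] using hxy

lemma i2_inj : Function.Injective (i2 d r) := by
  intro x y hxy
  apply Fin.ext
  simpa [i2] using hxy

def eidx (h : r < d) : Fin (d - r) ⊕ (Fin (2 * r) ⊕ Fin (d - r)) ≃ Fin (2 * d) :=
  Equiv.ofBijective (Sum.elim (i0 d r) (Sum.elim (i1 h) (i2 d r))) (by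
    constructor
    · rintro (x | x | x) (y | y | y) hxy <;> simp only [Sum.elim_inl, Sum.elim_inr] at hxy
      · rw [i0_inj hxy]
      · have := congrArg (fun i : Fin (2 * d) => blk d r i) hxy
        simp [blk_i0, blk_i1] at this
      · have := congrArg (fun i : Fin (2 * d) => blk d r i) hxy
        simp [blk_i0, blk_i2] at this
      · have := congrArg (fun i : Fin (2 * d) => blk d r i) hxy
        simp [blk_i0, blk_i1] at this
      · rw [i1_inj h hxy]
      · have := congrArg (fun i : Fin (2 * d) => blk d r i) hxy
        simp [blk_i1, blk_i2] at this
      · have := congrArg (fun i : Fin (2 * d) => blk d r i) hxy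
        simp [blk_i0, blk_i2] at this
      · have := congrArg (fun i : Fin (2 * d) => blk d r i) hxy
        simp [blk_i1, blk_i2] at this
      · rw [i2_inj hxy]
    · intro i
      rcases idx_cases h i with ⟨x, hx⟩ | ⟨x, hx⟩ | ⟨x, hx⟩
      · exact ⟨Sum.inl x, hx⟩
      · exact ⟨Sum.inr (Sum.inl x), hx⟩
      · exact ⟨Sum.inr (Sum.inr x), hx⟩)

lemma eidx_symm_i0 (h : r < d) (x) : (eidx h).symm (i0 d r x) = Sum.inl x := by
  rw [Equiv.symm_apply_eq]; rfl
lemma eidx_symm_i1 (h : r < d) (x) : (eidx h).symm (i1 h x) = Sum.inr (Sum.inl x) := by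
  rw [Equiv.symm_apply_eq]; rfl
lemma eidx_symm_i2 (h : r < d) (x) : (eidx h).symm (i2 d r x) = Sum.inr (Sum.inr x) := by
  rw [Equiv.symm_apply_eq]; rfl

variable {R : Type*} [CommRing R]

/-- Block multiplication. -/
lemma blkMul (h : r < d) {α β : Type*} (f : α → Fin (2 * d)) (g : β → Fin (2 * d))
    (M N : Matrix (Fin (2 * d)) (Fin (2 * d)) R) :
    (M * N).submatrix f g = M.submatrix f (i0 d r) * N.submatrix (i0 d r) g +
      M.submatrix f (i1 h) * N.submatrix (i1 h) g +
      M.submatrix f (i2 d r) * N.submatrix (i2 d r) g := by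
  ext a b
  simp only [submatrix_apply, Matrix.add_apply, Matrix.mul_apply]
  rw [← (eidx h).sum_comp, Fintype.sum_sum_type, Fintype.sum_sum_type, ← add_assoc]
  rfl

lemma ext_blocks (h : r < d) {M N : Matrix (Fin (2 * d)) (Fin (2 * d)) R}
    (h00 : M.submatrix (i0 d r) (i0 d r) = N.submatrix (i0 d r) (i0 d r))
    (h01 : M.submatrix (i0 d r) (i1 h) = N.submatrix (i0 d r) (i1 h))
    (h02 : M.submatrix (i0 d r) (i2 d r) = N.submatrix (i0 d r) (i2 d r))
    (h10 : M.submatrix (i1 h) (i0 d r) = N.submatrix (i1 h) (i0 d r))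
    (h11 : M.submatrix (i1 h) (i1 h) = N.submatrix (i1 h) (i1 h))
    (h12 : M.submatrix (i1 h) (i2 d r) = N.submatrix (i1 h) (i2 d r))
    (h20 : M.submatrix (i2 d r) (i0 d r) = N.submatrix (i2 d r) (i0 d r))
    (h21 : M.submatrix (i2 d r) (i1 h) = N.submatrix (i2 d r) (i1 h))
    (h22 : M.submatrix (i2 d r) (i2 d r) = N.submatrix (i2 d r) (i2 d r)) : M = N := by
  ext i j
  rcases idx_cases h i with ⟨x, rfl⟩ | ⟨x, rfl⟩ | ⟨x, rfl⟩ <;>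
  rcases idx_cases h j with ⟨y, rfl⟩ | ⟨y, rfl⟩ | ⟨y, rfl⟩
  · exact congrFun₂ h00 x y
  · exact congrFun₂ h01 x y
  · exact congrFun₂ h02 x y
  · exact congrFun₂ h10 x y
  · exact congrFun₂ h11 x y
  · exact congrFun₂ h12 x y
  · exact congrFun₂ h20 x y
  · exact congrFun₂ h21 x y
  · exact congrFun₂ h22 x y

lemma J00 : (Jsymp d R).submatrix (i0 d r) (i0 d r) = 0 := by
  ext x y
  have := x.2; have := y.2
  simp only [submatrix_apply, Jsymp, of_apply, i0, Matrix.zero_apply]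
  rw [if_neg (by omega)]
lemma J01 (h : r < d) : (Jsymp d R).submatrix (i0 d r) (i1 h) = 0 := by
  ext x y
  have := x.2; have := y.2
  simp only [submatrix_apply, Jsymp, of_apply, i0, i1, Matrix.zero_apply]
  rw [if_neg (by omega)]
lemma J02 : (Jsymp d R).submatrix (i0 d r) (i2 d r) = Jmat (d - r) R := by
  ext x y
  have := x.2; have := y.2
  simp only [submatrix_apply, Jsymp, Jmat, of_apply, i0, i2]
  rw [if_pos (show (x : ℕ) < d by omega)]
  exact if_congr (by omega) rfl rfl
lemma J10 (h : r < d) : (Jsymp d R).submatrix (i1 h) (i0 d r) = 0 := by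
  ext x y
  have := x.2; have := y.2
  simp only [submatrix_apply, Jsymp, of_apply, i0, i1, Matrix.zero_apply]
  rw [if_neg (by omega)]
lemma J11 (h : r < d) : (Jsymp d R).submatrix (i1 h) (i1 h) = Jsymp r R := by
  ext x y
  have := x.2; have := y.2
  simp only [submatrix_apply, Jsymp, of_apply, i1]
  exact if_congr (by omega) (if_congr (by omega) rfl rfl) rfl
lemma J12 (h : r < d) : (Jsymp d R).submatrix (i1 h) (i2 d r) = 0 := by
  ext x y
  have := x.2; have := y.2
  simp only [submatrix_apply, Jsymp, of_apply, i2, i1, Matrix.zero_apply]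
  rw [if_neg (by omega)]
lemma J20 : (Jsymp d R).submatrix (i2 d r) (i0 d r) = -Jmat (d - r) R := by
  ext x y
  have := x.2; have := y.2
  simp only [submatrix_apply, Jsymp, Jmat, of_apply, i0, i2, Matrix.neg_apply]
  rw [if_neg (show ¬ d + r + (x : ℕ) < d by omega)]
  split_ifs <;> first | rfl | omega | simp
lemma J21 (h : r < d) : (Jsymp d R).submatrix (i2 d r) (i1 h) = 0 := by
  ext x y
  have := x.2; have := y.2
  simp only [submatrix_apply, Jsymp, of_apply, i2, i1, Matrix.zero_apply]
  rw [if_neg (by omega)]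
lemma J22 : (Jsymp d R).submatrix (i2 d r) (i2 d r) = 0 := by
  ext x y
  have := x.2; have := y.2
  simp only [submatrix_apply, Jsymp, of_apply, i2, Matrix.zero_apply]
  rw [if_neg (by omega)]

lemma Jmat_tr (m : ℕ) : (Jmat m R)ᵀ = Jmat m R := by
  ext x y
  simp only [Jmat, of_apply, transpose_apply]
  exact if_congr (by omega) rfl rfl

lemma Jmat_sq (m : ℕ) : Jmat m R * Jmat m R = 1 := by
  ext x y
  have hx := x.2
  rw [Matrix.mul_apply, Finset.sum_eq_single (Fin.rev x)]
  · simp only [Jmat, of_apply, Fin.val_rev, Matrix.one_apply]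
    rw [if_pos (by omega), one_mul]
    exact if_congr (by rw [Fin.ext_iff]; omega) rfl rfl
  · intro b _ hb
    have : ¬ ((x : ℕ) + (b : ℕ) + 1 = m) := by
      intro hh; apply hb; apply Fin.ext; rw [Fin.val_rev]; omega
    simp [Jmat, this]
  · simp

lemma Jmat_map {S : Type*} [CommRing S] (f : R →+* S) (m : ℕ) : (Jmat m R).map f = Jmat m S := by
  ext x y
  simp only [Jmat, of_apply, map_apply]
  split_ifs <;> simp

lemma Jsymp_map {S : Type*} [CommRing S] (f : R →+* S) (m : ℕ) :
    (Jsymp m R).map f = Jsymp m S := by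
  ext x y
  simp only [Jsymp, of_apply, map_apply]
  split_ifs <;> simp

/-- Block upper triangular. -/
def BT (d r : ℕ) (M : Matrix (Fin (2 * d)) (Fin (2 * d)) R) : Prop :=
  ∀ i j : Fin (2 * d), blk d r (j : ℕ) < blk d r (i : ℕ) → M i j = 0

lemma BT.mul {M N : Matrix (Fin (2 * d)) (Fin (2 * d)) R} (hM : BT d r M) (hN : BT d r N) :
    BT d r (M * N) :=
  BlockTriangular.mul (b := fun i : Fin (2 * d) => blk d r i) hM hN

lemma BT.one : BT d r (1 : Matrix (Fin (2 * d)) (Fin (2 * d)) R) := by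
  intro i j hij
  rw [Matrix.one_apply, if_neg]
  rintro rfl
  exact lt_irrefl _ hij

lemma BT.inv {g : GL (Fin (2 * d)) R} (hM : BT d r (g : Matrix (Fin (2 * d)) (Fin (2 * d)) R)) :
    BT d r ((g⁻¹ : GL (Fin (2 * d)) R) : Matrix (Fin (2 * d)) (Fin (2 * d)) R) := by
  rw [Matrix.coe_units_inv]
  have := g.invertible
  exact blockTriangular_inv_of_blockTriangular (b := fun i : Fin (2 * d) => blk d r i) hM

lemma BT.map {S : Type*} [CommRing S] (f : R →+* S) {M : Matrix (Fin (2 * d)) (Fin (2 * d)) R}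
    (hM : BT d r M) : BT d r (M.map f) := by
  intro i j hij
  rw [map_apply, hM i j hij, map_zero]

lemma BT.of_map {S : Type*} [CommRing S] (f : R →+* S) (hf : Function.Injective f)
    {M : Matrix (Fin (2 * d)) (Fin (2 * d)) R} (hM : BT d r (M.map f)) : BT d r M := by
  intro i j hij
  apply hf
  rw [map_zero]
  exact hM i j hij

lemma BT.s10 (h : r < d) {M : Matrix (Fin (2 * d)) (Fin (2 * d)) R} (hM : BT d r M) :
    M.submatrix (i1 h) (i0 d r) = 0 := by
  ext x y
  exact hM _ _ (by rw [blk_i0, blk_i1]; norm_num)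
lemma BT.s20 {M : Matrix (Fin (2 * d)) (Fin (2 * d)) R} (hM : BT d r M) :
    M.submatrix (i2 d r) (i0 d r) = 0 := by
  ext x y
  exact hM _ _ (by rw [blk_i0, blk_i2]; norm_num)
lemma BT.s21 (h : r < d) {M : Matrix (Fin (2 * d)) (Fin (2 * d)) R} (hM : BT d r M) :
    M.submatrix (i2 d r) (i1 h) = 0 := by
  ext x y
  exact hM _ _ (by rw [blk_i1, blk_i2]; norm_num)

lemma BT.mul22 (h : r < d) {M N : Matrix (Fin (2 * d)) (Fin (2 * d)) R} (hM : BT d r M) :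
    (M * N).submatrix (i2 d r) (i2 d r) =
      M.submatrix (i2 d r) (i2 d r) * N.submatrix (i2 d r) (i2 d r) := by
  rw [blkMul h, hM.s20, hM.s21 h]
  simp

lemma BT.mul11 (h : r < d) {M N : Matrix (Fin (2 * d)) (Fin (2 * d)) R} (hM : BT d r M)
    (hN : BT d r N) :
    (M * N).submatrix (i1 h) (i1 h) =
      M.submatrix (i1 h) (i1 h) * N.submatrix (i1 h) (i1 h) := by
  rw [blkMul h, hM.s10, hN.s21 h]
  simp

lemma sub_one {α : Type*} [DecidableEq α] (f : α → Fin (2 * d)) (hf : Function.Injective f) :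
    (1 : Matrix (Fin (2 * d)) (Fin (2 * d)) R).submatrix f f = 1 :=
  submatrix_one f hf

/-- The similitude relation on the middle blocks. -/
lemma simil11 (h : r < d) {M : Matrix (Fin (2 * d)) (Fin (2 * d)) R} (hM : BT d r M) {c : R}
    (hc : Mᵀ * Jsymp d R * M = c • Jsymp d R) :
    (M.submatrix (i1 h) (i1 h))ᵀ * Jsymp r R * M.submatrix (i1 h) (i1 h) = c • Jsymp r R := by
  have := congrArg (fun X => X.submatrix (i1 h) (i1 h)) hc
  simp only [blkMul h, J00, J01, J02, J10, J11, J12, J20, J21, J22, hM.s10, hM.s20, hM.s21 h,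
    ← transpose_submatrix, submatrix_smul, Pi.smul_apply] at this
  simpa using this

lemma simil02 (h : r < d) {M : Matrix (Fin (2 * d)) (Fin (2 * d)) R} (hM : BT d r M) {c : R}
    (hc : Mᵀ * Jsymp d R * M = c • Jsymp d R) :
    (M.submatrix (i0 d r) (i0 d r))ᵀ * Jmat (d - r) R * M.submatrix (i2 d r) (i2 d r)
      = c • Jmat (d - r) R := by
  have := congrArg (fun X => X.submatrix (i0 d r) (i2 d r)) hc
  simp only [blkMul h, J00, J01 h, J02, J10 h, J11 h, J12 h, J20, J21 h, J22, hM.s10 h, hM.s20,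
    hM.s21 h, ← transpose_submatrix, submatrix_smul, Pi.smul_apply] at this
  simpa using this

lemma Jmat_smul_inj {m : ℕ} (hm : 0 < m) {a b : R} (hab : a • Jmat m R = b • Jmat m R) :
    a = b := by
  have := congrFun₂ hab ⟨0, hm⟩ ⟨m - 1, by omega⟩
  have h1 : m - 1 + 1 = m := by omega
  simpa [Jmat, h1] using this

lemma Jsymp_smul_inj (hd : 0 < d) {a b : R} (hab : a • Jsymp d R = b • Jsymp d R) :
    a = b := by
  have := congrFun₂ hab ⟨0, by omega⟩ ⟨2 * d - 1, by omega⟩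
  have h1 : 2 * d - 1 + 1 = 2 * d := by omega
  simpa [Jsymp, h1, hd] using this

/-- If the last block is trivial, the first block is the similitude. -/
lemma block00 (h : r < d) {M : Matrix (Fin (2 * d)) (Fin (2 * d)) R} (hM : BT d r M) {c : R}
    (hc : Mᵀ * Jsymp d R * M = c • Jsymp d R) (h2 : M.submatrix (i2 d r) (i2 d r) = 1) :
    M.submatrix (i0 d r) (i0 d r) = c • 1 := by
  have := simil02 h hM hc
  rw [h2, mul_one] at this
  have h3 := congrArg (fun X => (X * Jmat (d - r) R)ᵀ) this
  simpa [Matrix.mul_assoc, Jmat_sq] using h3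

lemma blk_eq0 (h : r < d) {i : Fin (2 * d)} (hi : blk d r (i : ℕ) = 0) : ∃ x, i0 d r x = i := by
  rcases idx_cases h i with ⟨x, rfl⟩ | ⟨x, rfl⟩ | ⟨x, rfl⟩
  · exact ⟨x, rfl⟩
  · simp [blk_i1] at hi
  · simp [blk_i2] at hi
lemma blk_eq1 (h : r < d) {i : Fin (2 * d)} (hi : blk d r (i : ℕ) = 1) : ∃ x, i1 h x = i := by
  rcases idx_cases h i with ⟨x, rfl⟩ | ⟨x, rfl⟩ | ⟨x, rfl⟩
  · simp [blk_i0] at hi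
  · exact ⟨x, rfl⟩
  · simp [blk_i2] at hi
lemma blk_eq2 (h : r < d) {i : Fin (2 * d)} (hi : blk d r (i : ℕ) = 2) : ∃ x, i2 d r x = i := by
  rcases idx_cases h i with ⟨x, rfl⟩ | ⟨x, rfl⟩ | ⟨x, rfl⟩
  · simp [blk_i0] at hi
  · simp [blk_i1] at hi
  · exact ⟨x, rfl⟩

lemma mem_Qr_iff (h : r < d) (g : GL (Fin (2 * d)) R) :
    g ∈ QrSet d r R ↔ ∃ c : Rˣ, (g, c) ∈ GSpP d R ∧ BT d r (g : Matrix (Fin (2 * d)) (Fin (2 * d)) R) ∧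
      (g : Matrix (Fin (2 * d)) (Fin (2 * d)) R).submatrix (i2 d r) (i2 d r) = 1 := by
  constructor
  · rintro ⟨c, h1, h2, h3, h4⟩
    refine ⟨c, h1, h2, ?_⟩
    ext x y
    rw [submatrix_apply, h4 _ _ (blk_i2 x) (blk_i2 y), Matrix.one_apply]
    exact if_congr i2_inj.eq_iff rfl rfl
  · rintro ⟨c, h1, h2, h3⟩
    refine ⟨c, h1, h2, ?_, ?_⟩
    · intro i j hi hj
      obtain ⟨x, rfl⟩ := blk_eq0 h hi
      obtain ⟨y, rfl⟩ := blk_eq0 h hj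
      have := congrFun₂ (block00 h h2 h1 h3) x y
      simp only [submatrix_apply, Matrix.smul_apply, Matrix.one_apply, smul_eq_mul] at this
      rw [this, mul_ite, mul_one, mul_zero]
      exact if_congr i0_inj.eq_iff.symm rfl rfl
    · intro i j hi hj
      obtain ⟨x, rfl⟩ := blk_eq2 h hi
      obtain ⟨y, rfl⟩ := blk_eq2 h hj
      have := congrFun₂ h3 x y
      simp only [submatrix_apply, Matrix.one_apply] at this
      rw [this]
      exact if_congr i2_inj.eq_iff.symm rfl rfl

lemma mem_Nr_iff (h : r < d) (g : GL (Fin (2 * d)) R) :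
    g ∈ NrSet d r R ↔ (g, (1 : Rˣ)) ∈ GSpP d R ∧ BT d r (g : Matrix (Fin (2 * d)) (Fin (2 * d)) R) ∧
      (g : Matrix (Fin (2 * d)) (Fin (2 * d)) R).submatrix (i1 h) (i1 h) = 1 ∧
      (g : Matrix (Fin (2 * d)) (Fin (2 * d)) R).submatrix (i2 d r) (i2 d r) = 1 := by
  constructor
  · rintro ⟨⟨⟨g', c⟩, hc, rfl⟩, h2, h3⟩
    have e2 : (g' : Matrix (Fin (2 * d)) (Fin (2 * d)) R).submatrix (i2 d r) (i2 d r) = 1 := by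
      ext x y
      have := h3 (i2 d r x) (i2 d r y) (by rw [blk_i2, blk_i2])
      rw [submatrix_apply, Matrix.one_apply]
      exact this.trans (if_congr i2_inj.eq_iff rfl rfl)
    have e1 : (g' : Matrix (Fin (2 * d)) (Fin (2 * d)) R).submatrix (i1 h) (i1 h) = 1 := by
      ext x y
      have := h3 (i1 h x) (i1 h y) (by rw [blk_i1, blk_i1])
      rw [submatrix_apply, Matrix.one_apply]
      exact this.trans (if_congr (i1_inj h).eq_iff rfl rfl)
    have e0 := block00 h h2 hc e2
    have hc1 : c = 1 := by
      apply Units.ext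
      have h0 : 0 < d - r := by omega
      have := congrFun₂ e0 ⟨0, h0⟩ ⟨0, h0⟩
      have h4 := h3 (i0 d r ⟨0, h0⟩) (i0 d r ⟨0, h0⟩) rfl
      rw [if_pos rfl] at h4
      rw [submatrix_apply] at this
      have h5 := this.symm.trans h4
      simpa using h5
    subst hc1
    exact ⟨hc, h2, e1, e2⟩
  · rintro ⟨h1, h2, h3, h4⟩
    refine ⟨⟨_, h1, rfl⟩, h2, ?_⟩
    have h0 := block00 h h2 h1 h4
    rw [Units.val_one, one_smul] at h0
    intro i j hij
    rcases idx_cases h i with ⟨x, rfl⟩ | ⟨x, rfl⟩ | ⟨x, rfl⟩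
    · rw [blk_i0] at hij
      obtain ⟨y, rfl⟩ := blk_eq0 h hij.symm
      have := congrFun₂ h0 x y
      rw [submatrix_apply, Matrix.one_apply] at this
      exact this.trans (if_congr i0_inj.eq_iff.symm rfl rfl)
    · rw [blk_i1] at hij
      obtain ⟨y, rfl⟩ := blk_eq1 h hij.symm
      have := congrFun₂ h3 x y
      rw [submatrix_apply, Matrix.one_apply] at this
      exact this.trans (if_congr (i1_inj h).eq_iff.symm rfl rfl)
    · rw [blk_i2] at hij
      obtain ⟨y, rfl⟩ := blk_eq2 h hij.symm
      have := congrFun₂ h4 x y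
      rw [submatrix_apply, Matrix.one_apply] at this
      exact this.trans (if_congr i2_inj.eq_iff.symm rfl rfl)

lemma Qr_mul (h : r < d) {g g' : GL (Fin (2 * d)) R} (hg : g ∈ QrSet d r R)
    (hg' : g' ∈ QrSet d r R) : g * g' ∈ QrSet d r R := by
  obtain ⟨c, h1, h2, h3⟩ := (mem_Qr_iff h g).1 hg
  obtain ⟨c', h1', h2', h3'⟩ := (mem_Qr_iff h g').1 hg'
  have h4 : (g * g', c * c') ∈ GSpP d R := by
    rw [← Prod.mk_mul_mk]
    exact (GSpP d R).mul_mem h1 h1'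
  have h5 : BT d r ((g * g' : GL (Fin (2 * d)) R) : Matrix (Fin (2 * d)) (Fin (2 * d)) R) := by
    rw [Units.val_mul]; exact h2.mul h2'
  refine (mem_Qr_iff h _).2 ⟨c * c', h4, h5, ?_⟩
  rw [Units.val_mul, h2.mul22 h, h3, h3', mul_one]

lemma Nr_sub_Qr (h : r < d) {g : GL (Fin (2 * d)) R} (hg : g ∈ NrSet d r R) :
    g ∈ QrSet d r R := by
  rw [mem_Qr_iff h]
  rw [mem_Nr_iff h] at hg
  exact ⟨1, hg.1, hg.2.1, hg.2.2.2⟩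

/-! ### Block diagonal matrices -/

def bd (h : r < d) (A : Matrix (Fin (d - r)) (Fin (d - r)) R)
    (B : Matrix (Fin (2 * r)) (Fin (2 * r)) R) (C : Matrix (Fin (d - r)) (Fin (d - r)) R) :
    Matrix (Fin (2 * d)) (Fin (2 * d)) R :=
  (fromBlocks A 0 0 (fromBlocks B 0 0 C)).submatrix (eidx h).symm (eidx h).symm

section bd
variable (h : r < d) (A : Matrix (Fin (d - r)) (Fin (d - r)) R)
    (B : Matrix (Fin (2 * r)) (Fin (2 * r)) R) (C : Matrix (Fin (d - r)) (Fin (d - r)) R)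

lemma bd00 : (bd h A B C).submatrix (i0 d r) (i0 d r) = A := by
  ext x y; simp [bd, eidx_symm_i0]
lemma bd01 : (bd h A B C).submatrix (i0 d r) (i1 h) = 0 := by
  ext x y; simp [bd, eidx_symm_i0, eidx_symm_i1]
lemma bd02 : (bd h A B C).submatrix (i0 d r) (i2 d r) = 0 := by
  ext x y; simp [bd, eidx_symm_i0, eidx_symm_i2]
lemma bd10 : (bd h A B C).submatrix (i1 h) (i0 d r) = 0 := by
  ext x y; simp [bd, eidx_symm_i0, eidx_symm_i1]
lemma bd11 : (bd h A B C).submatrix (i1 h) (i1 h) = B := by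
  ext x y; simp [bd, eidx_symm_i1]
lemma bd12 : (bd h A B C).submatrix (i1 h) (i2 d r) = 0 := by
  ext x y; simp [bd, eidx_symm_i1, eidx_symm_i2]
lemma bd20 : (bd h A B C).submatrix (i2 d r) (i0 d r) = 0 := by
  ext x y; simp [bd, eidx_symm_i0, eidx_symm_i2]
lemma bd21 : (bd h A B C).submatrix (i2 d r) (i1 h) = 0 := by
  ext x y; simp [bd, eidx_symm_i1, eidx_symm_i2]
lemma bd22 : (bd h A B C).submatrix (i2 d r) (i2 d r) = C := by
  ext x y; simp [bd, eidx_symm_i2]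

lemma bd_one : bd h (1 : Matrix (Fin (d - r)) (Fin (d - r)) R) 1 1 = 1 := by
  simp [bd]

lemma bd_mul (A' : Matrix (Fin (d - r)) (Fin (d - r)) R)
    (B' : Matrix (Fin (2 * r)) (Fin (2 * r)) R) (C' : Matrix (Fin (d - r)) (Fin (d - r)) R) :
    bd h A B C * bd h A' B' C' = bd h (A * A') (B * B') (C * C') := by
  simp only [bd, submatrix_mul_equiv, fromBlocks_multiply]
  simp

lemma bd_map {S : Type*} [CommRing S] (f : R →+* S) :
    (bd h A B C).map f = bd h (A.map f) (B.map f) (C.map f) := by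
  simp only [bd, ← submatrix_map, fromBlocks_map, Matrix.map_zero f (map_zero f)]

lemma bd_BT : BT d r (bd h A B C) := by
  intro i j hij
  rcases idx_cases h i with ⟨x, rfl⟩ | ⟨x, rfl⟩ | ⟨x, rfl⟩ <;>
  rcases idx_cases h j with ⟨y, rfl⟩ | ⟨y, rfl⟩ | ⟨y, rfl⟩ <;>
  simp [blk_i0, blk_i1, blk_i2] at hij <;>
  simp [bd, eidx_symm_i0, eidx_symm_i1, eidx_symm_i2]

lemma bd_off {i j : Fin (2 * d)} (hij : blk d r (i : ℕ) ≠ blk d r (j : ℕ)) :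
    bd h A B C i j = 0 := by
  rcases idx_cases h i with ⟨x, rfl⟩ | ⟨x, rfl⟩ | ⟨x, rfl⟩ <;>
  rcases idx_cases h j with ⟨y, rfl⟩ | ⟨y, rfl⟩ | ⟨y, rfl⟩ <;>
  simp [blk_i0, blk_i1, blk_i2] at hij <;>
  simp [bd, eidx_symm_i0, eidx_symm_i1, eidx_symm_i2]

end bd

lemma bd_simil (h : r < d) {A : Matrix (Fin (d - r)) (Fin (d - r)) R}
    {B : Matrix (Fin (2 * r)) (Fin (2 * r)) R} {C : Matrix (Fin (d - r)) (Fin (d - r)) R} {c : R}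
    (hB : Bᵀ * Jsymp r R * B = c • Jsymp r R)
    (hAC : Aᵀ * Jmat (d - r) R * C = c • Jmat (d - r) R) :
    (bd h A B C)ᵀ * Jsymp d R * bd h A B C = c • Jsymp d R := by
  have hCA : Cᵀ * Jmat (d - r) R * A = c • Jmat (d - r) R := by
    have := congrArg transpose hAC
    simpa [Matrix.mul_assoc, Jmat_tr] using this
  apply ext_blocks h <;>
  simp only [blkMul h, J00, J01 h, J02, J10 h, J11 h, J12 h, J20, J21 h, J22,
    ← transpose_submatrix, submatrix_smul, Pi.smul_apply, bd00, bd01, bd02, bd10, bd11, bd12, bd20,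
    bd21, bd22] <;>
  simp [hB, hAC, hCA]

def bdGL (h : r < d) (A : GL (Fin (d - r)) R) (B : GL (Fin (2 * r)) R) (C : GL (Fin (d - r)) R) :
    GL (Fin (2 * d)) R :=
  ⟨bd h A B C, bd h (A⁻¹ : GL _ R) (B⁻¹ : GL _ R) (C⁻¹ : GL _ R),
    by rw [bd_mul, Units.mul_inv, Units.mul_inv, Units.mul_inv, bd_one],
    by rw [bd_mul, Units.inv_mul, Units.inv_mul, Units.inv_mul, bd_one]⟩

/-- `A ↦ J (ᵗA)⁻¹ J`. -/
def dualGL {m : ℕ} (A : GL (Fin m) R) : GL (Fin m) R :=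
  ⟨Jmat m R * ((A⁻¹ : GL (Fin m) R) : Matrix (Fin m) (Fin m) R)ᵀ * Jmat m R,
   Jmat m R * (A : Matrix (Fin m) (Fin m) R)ᵀ * Jmat m R,
   by
    have h1 : ((A⁻¹ : GL (Fin m) R) : Matrix (Fin m) (Fin m) R)ᵀ * (A : Matrix (Fin m) (Fin m) R)ᵀ = 1 := by
      rw [← transpose_mul, Units.mul_inv, transpose_one]
    calc _ = Jmat m R * (((A⁻¹ : GL (Fin m) R) : Matrix (Fin m) (Fin m) R)ᵀ * (Jmat m R * Jmat m R) *
          (A : Matrix (Fin m) (Fin m) R)ᵀ) * Jmat m R := by simp only [Matrix.mul_assoc]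
      _ = 1 := by rw [Jmat_sq, mul_one, h1, mul_one, Jmat_sq],
   by
    have h1 : (A : Matrix (Fin m) (Fin m) R)ᵀ * ((A⁻¹ : GL (Fin m) R) : Matrix (Fin m) (Fin m) R)ᵀ = 1 := by
      rw [← transpose_mul, Units.inv_mul, transpose_one]
    calc _ = Jmat m R * ((A : Matrix (Fin m) (Fin m) R)ᵀ * (Jmat m R * Jmat m R) *
          ((A⁻¹ : GL (Fin m) R) : Matrix (Fin m) (Fin m) R)ᵀ) * Jmat m R := by simp only [Matrix.mul_assoc]
      _ = 1 := by rw [Jmat_sq, mul_one, h1, mul_one, Jmat_sq]⟩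

lemma dualGL_rel {m : ℕ} (A : GL (Fin m) R) :
    (dualGL A : Matrix (Fin m) (Fin m) R)ᵀ * Jmat m R * (A : Matrix (Fin m) (Fin m) R) = Jmat m R := by
  simp only [dualGL, transpose_mul, Jmat_tr, transpose_transpose]
  calc _ = Jmat m R * ((A⁻¹ : GL (Fin m) R) : Matrix (Fin m) (Fin m) R) * (Jmat m R * Jmat m R) *
        (A : Matrix (Fin m) (Fin m) R) := by simp only [Matrix.mul_assoc]
    _ = _ := by rw [Jmat_sq, mul_one, Matrix.mul_assoc, Units.inv_mul, mul_one]

lemma glMap_coe {m : ℕ} {S : Type*} [CommRing S] (f : R →+* S) (g : GL (Fin m) R) :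
    (glMap f g : Matrix (Fin m) (Fin m) S) = (g : Matrix (Fin m) (Fin m) R).map f := rfl

lemma glMap_dual {m : ℕ} {S : Type*} [CommRing S] (f : R →+* S) (g : GL (Fin m) R) :
    glMap f (dualGL g) = dualGL (glMap f g) := by
  apply Units.ext
  rw [glMap_coe]
  simp only [dualGL, Matrix.map_mul, Jmat_map, ← transpose_map, ← map_inv, glMap_coe]

lemma glMap_bdGL (h : r < d) {S : Type*} [CommRing S] (f : R →+* S) (A B C) :
    glMap f (bdGL h A B C) = bdGL h (glMap f A) (glMap f B) (glMap f C) := by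
  apply Units.ext
  rw [glMap_coe]
  simp only [bdGL, bd_map, glMap_coe]

lemma glMap_inj {m : ℕ} {S : Type*} [CommRing S] {f : R →+* S} (hf : Function.Injective f) :
    Function.Injective (glMap f : GL (Fin m) R →* GL (Fin m) S) := by
  intro a b hab
  apply Units.ext
  ext i j
  apply hf
  have h1 : (glMap f a : Matrix (Fin m) (Fin m) S) = (glMap f b : Matrix (Fin m) (Fin m) S) := by
    rw [hab]
  exact congrFun₂ h1 i j

lemma GSpP_map {S : Type*} [CommRing S] (f : R →+* S) {g : GL (Fin (2 * d)) R} {c : Rˣ}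
    (hg : (g, c) ∈ GSpP d R) : (glMap f g, Units.map (f : R →* S) c) ∈ GSpP d S := by
  have h1 : (g : Matrix (Fin (2 * d)) (Fin (2 * d)) R)ᵀ * Jsymp d R * (g : Matrix (Fin (2 * d)) (Fin (2 * d)) R) = (c : R) • Jsymp d R := hg
  have h2 := congrArg (fun X => X.map f) h1
  simp only [Matrix.map_mul, Jsymp_map, transpose_map] at h2
  have h3 : ((c : R) • Jsymp d R).map f = f c • Jsymp d S := by
    rw [← Jsymp_map f]; ext i j; simp
  rw [h3] at h2
  exact h2

end Blocks

/-! ### Arithmetic of `Ẑ` and `𝔸_f` -/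

lemma zhat_smul_eq_zero (b : ℕ+) (x : ↥ZHat) (hx : ((b : ℕ) : ↥ZHat) * x = 0) : x = 0 := by
  apply Subtype.ext
  funext k
  have h1 : ((b : ℕ) : ZMod ((b * k : ℕ+) : ℕ)) * x.1 (b * k) = 0 := by
    have := congrFun (congrArg Subtype.val hx) (b * k)
    simpa using this
  have h2 := x.2 k (b * k) (by rw [PNat.mul_coe]; exact Dvd.intro_left _ rfl)
  obtain ⟨z, hz⟩ := ZMod.intCast_surjective (x.1 (b * k))
  rw [← hz] at h1 h2
  have h3 : (((b * k : ℕ+) : ℕ) : ℤ) ∣ (b : ℕ) * z := by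
    rw [← ZMod.intCast_zmod_eq_zero_iff_dvd, Int.cast_mul, Int.cast_natCast]
    exact h1
  rw [map_intCast] at h2
  rw [← h2]
  change ((z : ℤ) : ZMod (k : ℕ)) = 0
  rw [ZMod.intCast_zmod_eq_zero_iff_dvd]
  rw [PNat.mul_coe, Nat.cast_mul] at h3
  exact Int.dvd_of_mul_dvd_mul_left (by exact_mod_cast b.ne_zero) h3

lemma zhat_int_smul {a : ℤ} (ha : a ≠ 0) (x : ↥ZHat) (hx : (a : ↥ZHat) * x = 0) : x = 0 := by
  have hp : 0 < a.natAbs := Int.natAbs_pos.2 ha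
  apply zhat_smul_eq_zero ⟨a.natAbs, hp⟩
  change ((a.natAbs : ℕ) : ↥ZHat) * x = 0
  rcases Int.natAbs_eq a with h | h
  · rw [h] at hx; simpa using hx
  · rw [h] at hx; simpa using hx

lemma zhat_torsionFree : Module.IsTorsionFree ℤ ↥ZHat := by
  rw [Module.isTorsionFree_iff_smul_eq_zero]
  intro a x hx
  rw [zsmul_eq_mul] at hx
  by_cases ha : a = 0
  · exact Or.inl ha
  · exact Or.inr (zhat_int_smul ha x hx)

lemma zhatToA_inj : Function.Injective zhatToA := by
  have := zhat_torsionFree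
  have : Module.Flat ℤ ↥ZHat := inferInstance
  exact Algebra.TensorProduct.includeLeft_injective (R := ℤ) (S := ℤ) (A := ↥ZHat) (B := ℚ)
    (RingHom.injective_int (algebraMap ℤ ℚ))

lemma zhat_rat {x : ↥ZHat} {q : ℚ} (h : zhatToA x = ratToA q) : ∃ z : ℤ, x = (z : ↥ZHat) := by
  have hb : (q.den : ℤ) ≠ 0 := by exact_mod_cast q.den_nz
  have h1 : ((q.den : ℤ) : ↥ZHat) * x = ((q.num : ℤ) : ↥ZHat) := by
    apply zhatToA_inj
    rw [map_mul, h, map_intCast, map_intCast, ← map_intCast ratToA, ← map_mul,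
      ← map_intCast ratToA]
    congr 1
    rw [Int.cast_natCast, mul_comm, Rat.mul_den_eq_num]
  have h2 : (q.den : ℤ) ∣ q.num := by
    obtain ⟨k, hk⟩ : ∃ k : ℕ+, (k : ℕ) = q.den := ⟨⟨q.den, q.den_pos⟩, rfl⟩
    have h3 := congrArg (projZHat k) h1
    rw [map_mul, map_intCast, map_intCast] at h3
    have h4 : (((q.den : ℕ) : ℤ) : ZMod (k : ℕ)) = 0 :=
      (ZMod.intCast_zmod_eq_zero_iff_dvd _ _).2 (by rw [hk])
    rw [h4, zero_mul] at h3
    have h5 := (ZMod.intCast_zmod_eq_zero_iff_dvd _ _).1 h3.symm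
    rwa [hk] at h5
  obtain ⟨z, hz⟩ := h2
  refine ⟨z, ?_⟩
  rw [← sub_eq_zero]
  apply zhat_int_smul hb
  rw [mul_sub, h1, hz]
  push_cast
  ring

lemma zhat_intCast_inj {a b : ℤ} (h : (a : ↥ZHat) = (b : ↥ZHat)) : a = b := by
  by_contra hab
  have := zhat_int_smul (sub_ne_zero.2 hab) 1 (by push_cast; rw [h]; ring)
  have h2 := congrArg (projZHat 2) this
  rw [map_one, map_zero] at h2
  exact absurd h2 (by decide)

lemma zhat_intCast_unit {a : ℤ} (h : IsUnit (a : ↥ZHat)) : IsUnit a := by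
  by_cases ha : a = 0
  · subst ha
    have := h.map (projZHat 2)
    rw [Int.cast_zero, map_zero, isUnit_zero_iff] at this
    exact absurd this (by decide)
  · have hp : 0 < a.natAbs := Int.natAbs_pos.2 ha
    have h1 := h.map (projZHat ⟨a.natAbs, hp⟩)
    rw [map_intCast] at h1
    have h2 : ((a : ℤ) : ZMod a.natAbs) = 0 := by
      rw [ZMod.intCast_zmod_eq_zero_iff_dvd]
      exact Int.natAbs_dvd.2 dvd_rfl
    change IsUnit ((a : ℤ) : ZMod a.natAbs) at h1
    rw [h2, isUnit_zero_iff] at h1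
    have h3 : ((1 : ℤ) : ZMod a.natAbs) = 0 := by rw [Int.cast_one]; exact h1.symm
    rw [ZMod.intCast_zmod_eq_zero_iff_dvd] at h3
    exact Int.isUnit_iff_natAbs_eq.2 (Nat.dvd_one.1 (by exact_mod_cast h3))

/-! ### The integral model of `H_r` -/

section Model

variable {d r : ℕ}

lemma GSpP_iff {R : Type*} [CommRing R] (g : GL (Fin (2 * d)) R) (c : Rˣ) :
    (g, c) ∈ GSpP d R ↔ (g : Matrix (Fin (2 * d)) (Fin (2 * d)) R)ᵀ * Jsymp d R *
      (g : Matrix (Fin (2 * d)) (Fin (2 * d)) R) = (c : R) • Jsymp d R := Iff.rfl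

lemma GSpP_mul {R : Type*} [CommRing R] {g g' : GL (Fin (2 * d)) R} {c c' : Rˣ}
    (h : (g, c) ∈ GSpP d R) (h' : (g', c') ∈ GSpP d R) : (g * g', c * c') ∈ GSpP d R := by
  rw [← Prod.mk_mul_mk]
  exact (GSpP d R).mul_mem h h'

lemma GSpP_inv {R : Type*} [CommRing R] {g : GL (Fin (2 * d)) R} {c : Rˣ}
    (h : (g, c) ∈ GSpP d R) : (g⁻¹, c⁻¹) ∈ GSpP d R := by
  rw [← Prod.inv_mk]
  exact (GSpP d R).inv_mem h

lemma GSpP_uniq {R : Type*} [CommRing R] (hd : 0 < d) {g : GL (Fin (2 * d)) R} {c c' : Rˣ}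
    (h : (g, c) ∈ GSpP d R) (h' : (g, c') ∈ GSpP d R) : c = c' := by
  apply Units.ext
  apply Jsymp_smul_inj hd
  rw [GSpP_iff] at h h'
  rw [← h, h']

lemma inv22 {R : Type*} [CommRing R] (h : r < d) {g : GL (Fin (2 * d)) R}
    (hg : BT d r (g : Matrix (Fin (2 * d)) (Fin (2 * d)) R)) {γ : GL (Fin (d - r)) R}
    (hγ : (g : Matrix (Fin (2 * d)) (Fin (2 * d)) R).submatrix (i2 d r) (i2 d r) =
      (γ : Matrix (Fin (d - r)) (Fin (d - r)) R)) :
    ((g⁻¹ : GL (Fin (2 * d)) R) : Matrix (Fin (2 * d)) (Fin (2 * d)) R).submatrix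
      (i2 d r) (i2 d r) = ((γ⁻¹ : GL (Fin (d - r)) R) : Matrix (Fin (d - r)) (Fin (d - r)) R) := by
  have h1 := hg.inv.mul22 h (N := (g : Matrix (Fin (2 * d)) (Fin (2 * d)) R))
  rw [Units.inv_mul, sub_one _ i2_inj, hγ] at h1
  exact left_inv_eq_right_inv h1.symm (Units.mul_inv γ)

/-- The middle diagonal block. -/
def midGL {R : Type*} [CommRing R] (h : r < d) (g : GL (Fin (2 * d)) R)
    (hg : BT d r (g : Matrix (Fin (2 * d)) (Fin (2 * d)) R)) : GL (Fin (2 * r)) R :=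
  ⟨(g : Matrix (Fin (2 * d)) (Fin (2 * d)) R).submatrix (i1 h) (i1 h),
   ((g⁻¹ : GL (Fin (2 * d)) R) : Matrix (Fin (2 * d)) (Fin (2 * d)) R).submatrix (i1 h) (i1 h),
   by rw [← hg.mul11 h hg.inv, Units.mul_inv, sub_one _ (i1_inj h)],
   by rw [← hg.inv.mul11 h hg, Units.inv_mul, sub_one _ (i1_inj h)]⟩

abbrev Amb (d r : ℕ) := GL (Fin (2 * d)) ↥ZHat × (↥ZHat)ˣ × GL (Fin (d - r)) ℤ

/-- Membership predicate for the integral model of `H_r`. -/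
structure InModel (d r : ℕ) (n : ℕ+) (g : GL (Fin (2 * d)) ↥ZHat) (c : (↥ZHat)ˣ)
    (γ : GL (Fin (d - r)) ℤ) : Prop where
  sim : (g, c) ∈ GSpP d ↥ZHat
  red : glMap (projZHat n) g = 1
  bt : BT d r (g : Matrix (Fin (2 * d)) (Fin (2 * d)) ↥ZHat)
  redγ : glMap (Int.castRingHom (ZMod (n : ℕ))) γ = 1
  blk2 : (g : Matrix (Fin (2 * d)) (Fin (2 * d)) ↥ZHat).submatrix (i2 d r) (i2 d r) =
    (glMap (Int.castRingHom ↥ZHat) γ : GL (Fin (d - r)) ↥ZHat)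

def Model (h : r < d) (n : ℕ+) : Subgroup (Amb d r) where
  carrier := {x | InModel d r n x.1 x.2.1 x.2.2}
  one_mem' := by
    refine ⟨(GSpP d ↥ZHat).one_mem, map_one _, ?_, map_one _, ?_⟩
    · exact BT.one
    · simp only [Prod.fst_one, Prod.snd_one, map_one, Units.val_one]
      exact sub_one _ i2_inj
  mul_mem' := by
    rintro ⟨g, c, γ⟩ ⟨g', c', γ'⟩ ⟨h1, h2, h3, h4, h5⟩ ⟨h1', h2', h3', h4', h5'⟩
    simp only at h1 h2 h3 h4 h5 h1' h2' h3' h4' h5'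
    refine ⟨GSpP_mul h1 h1', ?_, ?_, ?_, ?_⟩
    · simp only [Prod.mk_mul_mk, map_mul, h2, h2', mul_one]
    · simp only [Prod.mk_mul_mk, Units.val_mul]
      exact h3.mul h3'
    · simp only [Prod.mk_mul_mk, map_mul, h4, h4', mul_one]
    · simp only [Prod.mk_mul_mk, map_mul, Units.val_mul]
      rw [h3.mul22 h, h5, h5']
  inv_mem' := by
    rintro ⟨g, c, γ⟩ ⟨h1, h2, h3, h4, h5⟩
    simp only at h1 h2 h3 h4 h5
    refine ⟨GSpP_inv h1, ?_, ?_, ?_, ?_⟩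
    · simp only [Prod.inv_mk, map_inv, h2, inv_one]
    · exact h3.inv
    · simp only [Prod.inv_mk, map_inv, h4, inv_one]
    · simp only [Prod.inv_mk, map_inv]
      exact inv22 h h3 h5

lemma mem_Model {h : r < d} {n : ℕ+} {x : Amb d r} :
    x ∈ Model h n ↔ InModel d r n x.1 x.2.1 x.2.2 := Iff.rfl

/-- The embedding into `GL_{2d}(𝔸_f)`. -/
def emb (h : r < d) (n : ℕ+) : ↥(Model h n) →* GL (Fin (2 * d)) AQf :=
  (glMap zhatToA).comp ((MonoidHom.fst _ _).comp (Model h n).subtype)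

lemma emb_apply {h : r < d} {n : ℕ+} (x : ↥(Model h n)) : emb h n x = glMap zhatToA x.1.1 := rfl

lemma intMap_inj : Function.Injective (Int.castRingHom ↥ZHat) := fun _ _ h => zhat_intCast_inj h

lemma emb_inj (h : r < d) (n : ℕ+) : Function.Injective (emb h n) := by
  rintro ⟨⟨g, c, γ⟩, hx⟩ ⟨⟨g', c', γ'⟩, hx'⟩ hxy
  have hg : g = g' := glMap_inj zhatToA_inj hxy
  subst hg
  have hc : c = c' := GSpP_uniq (by omega) hx.sim hx'.sim
  have hγ : γ = γ' := by
    apply glMap_inj intMap_inj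
    apply Units.ext
    rw [← hx.blk2, ← hx'.blk2]
  subst hc hγ
  rfl

/-- Projection to `K_r`. -/
def toKr (h : r < d) (n : ℕ+) : ↥(Model h n) →* ↥(KrP r n) :=
  MonoidHom.mk' (fun x => ⟨⟨(midGL h x.1.1 x.2.bt, x.1.2.1), simil11 h x.2.bt x.2.sim⟩, by
      have hx := x.2
      rw [KrP, MonoidHom.mem_ker]
      apply Prod.ext
      · apply Units.ext
        have h1 : (glMap (projZHat n) x.1.1 : Matrix (Fin (2 * d)) (Fin (2 * d)) (ZMod (n : ℕ))) = 1 := by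
          rw [hx.red, Units.val_one]
        have h2 := congrArg (fun X => X.submatrix (i1 h) (i1 h)) h1
        simp only [sub_one _ (i1_inj h)] at h2
        exact h2
      · have h1 := GSpP_map (projZHat n) hx.sim
        rw [hx.red] at h1
        exact GSpP_uniq (by omega) h1 (GSpP d (ZMod (n : ℕ))).one_mem⟩)
    (by
      intro x y
      apply Subtype.ext
      apply Subtype.ext
      apply Prod.ext
      · apply Units.ext
        exact x.2.bt.mul11 h y.2.bt
      · rfl)

lemma toKr_fst {h : r < d} {n : ℕ+} (x : ↥(Model h n)) :
    ((toKr h n x).1.1.1 : Matrix (Fin (2 * r)) (Fin (2 * r)) ↥ZHat) =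
      (x.1.1 : Matrix (Fin (2 * d)) (Fin (2 * d)) ↥ZHat).submatrix (i1 h) (i1 h) := rfl
lemma toKr_snd {h : r < d} {n : ℕ+} (x : ↥(Model h n)) : (toKr h n x).1.1.2 = x.1.2.1 := rfl

/-- Projection to `Γ_{ℓ,r}`. -/
def toGamma (h : r < d) (n : ℕ+) : ↥(Model h n) →* ↥(GammaLr (d - r) (n : ℕ)) :=
  MonoidHom.mk' (fun x => ⟨x.1.2.2, x.2.redγ⟩) (fun _ _ => rfl)

lemma toGamma_coe {h : r < d} {n : ℕ+} (x : ↥(Model h n)) : (toGamma h n x).1 = x.1.2.2 := rfl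

def psi (h : r < d) (n : ℕ+) : ↥(Model h n) →* ↥(GammaLr (d - r) (n : ℕ)) × ↥(KrP r n) :=
  (toGamma h n).prod (toKr h n)

/-- scalar matrix in `GL`. -/
def scGL {R : Type*} [CommRing R] (m : ℕ) (c : Rˣ) : GL (Fin m) R :=
  Units.map (Matrix.scalar (Fin m)).toMonoidHom c

lemma scGL_coe {R : Type*} [CommRing R] (m : ℕ) (c : Rˣ) :
    (scGL m c : Matrix (Fin m) (Fin m) R) = (c : R) • 1 := by
  ext i j
  simp [scGL, Matrix.one_apply, Matrix.diagonal_apply]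

lemma bdGL_mem {R : Type*} [CommRing R] (h : r < d) (γ : GL (Fin (d - r)) R)
    {B : GL (Fin (2 * r)) R} {c : Rˣ} (hB : (B, c) ∈ GSpP r R) :
    (bdGL h (scGL _ c * dualGL γ) B γ, c) ∈ GSpP d R := by
  rw [GSpP_iff] at hB ⊢
  apply bd_simil h hB
  rw [Units.val_mul, scGL_coe]
  simp only [smul_mul_assoc, one_mul, transpose_smul, dualGL_rel]

lemma bdGL_one {R : Type*} [CommRing R] (h : r < d) :
    bdGL h (1 : GL (Fin (d - r)) R) 1 1 = 1 := by
  apply Units.ext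
  exact bd_one h

lemma dualGL_one {R : Type*} [CommRing R] (m : ℕ) : dualGL (1 : GL (Fin m) R) = 1 := by
  apply Units.ext
  simp [dualGL, Jmat_sq]

lemma glMap_int (n : ℕ+) {m : ℕ} (γ : GL (Fin m) ℤ) :
    glMap (projZHat n) (glMap (Int.castRingHom ↥ZHat) γ) =
      glMap (Int.castRingHom (ZMod (n : ℕ))) γ := by
  apply Units.ext
  ext i j
  exact map_intCast (projZHat n) _

lemma glMap_sc {R S : Type*} [CommRing R] [CommRing S] (f : R →+* S) (m : ℕ) (c : Rˣ) :
    glMap f (scGL m c) = scGL m (Units.map (f : R →* S) c) := by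
  apply Units.ext
  rw [glMap_coe, scGL_coe, scGL_coe]
  ext i j
  simp [Matrix.one_apply, apply_ite f]

lemma scGL_one {R : Type*} [CommRing R] (m : ℕ) : scGL m (1 : Rˣ) = 1 := map_one _

lemma bdGL_inModel (h : r < d) (n : ℕ+) {γ : GL (Fin (d - r)) ℤ}
    (hγ : glMap (Int.castRingHom (ZMod (n : ℕ))) γ = 1) {B : GL (Fin (2 * r)) ↥ZHat} {c : (↥ZHat)ˣ}
    (hB : (B, c) ∈ GSpP r ↥ZHat) (hB1 : glMap (projZHat n) B = 1)
    (hc1 : Units.map (projZHat n : ↥ZHat →* ZMod (n : ℕ)) c = 1) :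
    InModel d r n (bdGL h (scGL _ c * dualGL (glMap (Int.castRingHom ↥ZHat) γ)) B
      (glMap (Int.castRingHom ↥ZHat) γ)) c γ := by
  refine ⟨bdGL_mem h _ hB, ?_, bd_BT h _ _ _, hγ, bd22 h _ _ _⟩
  rw [glMap_bdGL, map_mul, glMap_dual, glMap_sc, hc1, scGL_one, glMap_int, hγ, hB1, dualGL_one,
    one_mul, bdGL_one]

lemma psi_surj (h : r < d) (n : ℕ+) : Function.Surjective (psi h n) := by
  rintro ⟨⟨γ, hγ⟩, ⟨⟨⟨B, c⟩, hB⟩, hK⟩⟩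
  have hB1 : glMap (projZHat n) B = 1 := congrArg Prod.fst hK
  have hc1 : Units.map (projZHat n : ↥ZHat →* ZMod (n : ℕ)) c = 1 := congrArg Prod.snd hK
  refine ⟨⟨⟨_, c, γ⟩, bdGL_inModel h n hγ hB hB1 hc1⟩, ?_⟩
  apply Prod.ext
  · rfl
  · apply Subtype.ext
    apply Subtype.ext
    apply Prod.ext
    · apply Units.ext
      exact bd11 h _ _ _
    · rfl

lemma psi_eq_one_iff {h : r < d} {n : ℕ+} (x : ↥(Model h n)) :
    psi h n x = 1 ↔ x.1.2.2 = 1 ∧ x.1.2.1 = 1 ∧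
      (x.1.1 : Matrix (Fin (2 * d)) (Fin (2 * d)) ↥ZHat).submatrix (i1 h) (i1 h) = 1 := by
  constructor
  · intro hx
    have h1 : toGamma h n x = 1 := congrArg Prod.fst hx
    have h2 : toKr h n x = 1 := congrArg Prod.snd hx
    refine ⟨?_, ?_, ?_⟩
    · rw [← toGamma_coe, h1]; rfl
    · rw [← toKr_snd, h2]; rfl
    · rw [← toKr_fst, h2]; rfl
  · rintro ⟨h1, h2, h3⟩
    apply Prod.ext
    · exact Subtype.ext h1
    · apply Subtype.ext
      apply Subtype.ext
      apply Prod.ext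
      · exact Units.ext h3
      · exact h2

end Model

/-! ### The main argument -/

section Main

variable {d r : ℕ}

lemma InModel.mem_KdA {n : ℕ+} {g c γ} (hx : InModel d r n g c γ) :
    glMap zhatToA g ∈ KdA d n :=
  ⟨g, ⟨⟨(g, c), hx.sim, rfl⟩, hx.red⟩, rfl⟩

lemma Llr_sub_Pr {p} (hp : p ∈ LlrQinA d r) : p ∈ PrQinA d r := by
  obtain ⟨p', ⟨h1, h2, -⟩, rfl⟩ := hp
  refine ⟨p', ⟨⟨(p', 1), ?_, rfl⟩, fun i j hij => h2 i j (ne_of_gt hij)⟩, rfl⟩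
  rw [SetLike.mem_coe, GSpP_iff, Units.val_one, one_smul]
  exact h1

lemma glMap_comp {m : ℕ} {R S T : Type*} [CommRing R] [CommRing S] [CommRing T] (f : R →+* S)
    (g : S →+* T) (x : GL (Fin m) R) : glMap g (glMap f x) = glMap (g.comp f) x := rfl

lemma int_rat : zhatToA.comp (Int.castRingHom ↥ZHat) = ratToA.comp (Int.castRingHom ℚ) :=
  RingHom.ext_int _ _

lemma emb_dec (h : r < d) (n : ℕ+) {g c γ} (hx : InModel d r n g c γ) :
    ∃ p ∈ LlrQinA d r, p ∈ KdA d n ∧ ∃ q ∈ QrSet d r AQf, q ∈ KdA d n ∧ glMap zhatToA g = p * q := by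
  have hone : ((1 : GL (Fin (2 * r)) ↥ZHat), (1 : (↥ZHat)ˣ)) ∈ GSpP r ↥ZHat :=
    (GSpP r ↥ZHat).one_mem
  have hp := bdGL_inModel h n hx.redγ hone (map_one _) (map_one _)
  rw [scGL_one, one_mul] at hp
  set p := bdGL h (dualGL (glMap (Int.castRingHom ↥ZHat) γ)) 1 (glMap (Int.castRingHom ↥ZHat) γ)
    with hpdef
  have hq : InModel d r n (p⁻¹ * g) (1⁻¹ * c) (γ⁻¹ * γ) :=
    (Model h n).mul_mem ((Model h n).inv_mem (x := ((p, 1, γ) : Amb d r)) hp)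
      (show ((g, c, γ) : Amb d r) ∈ Model h n from hx)
  refine ⟨glMap zhatToA p, ?_, hp.mem_KdA, glMap zhatToA (p⁻¹ * g), ?_, hq.mem_KdA, ?_⟩
  · have hone' : ((1 : GL (Fin (2 * r)) ℚ), (1 : ℚˣ)) ∈ GSpP r ℚ := (GSpP r ℚ).one_mem
    have hs := bdGL_mem h (glMap (Int.castRingHom ℚ) γ) hone'
    rw [scGL_one, one_mul] at hs
    refine ⟨bdGL h (dualGL (glMap (Int.castRingHom ℚ) γ)) 1 (glMap (Int.castRingHom ℚ) γ),
      ⟨?_, ?_, ?_⟩, ?_⟩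
    · rw [GSpP_iff, Units.val_one, one_smul] at hs
      exact hs
    · intro i j hij
      exact bd_off h _ _ _ hij
    · intro i j hi hj
      obtain ⟨x, rfl⟩ := blk_eq1 h hi
      obtain ⟨y, rfl⟩ := blk_eq1 h hj
      have := congrFun₂ (bd11 h (dualGL (glMap (Int.castRingHom ℚ) γ) : Matrix _ _ ℚ)
        ((1 : GL (Fin (2 * r)) ℚ) : Matrix _ _ ℚ) (glMap (Int.castRingHom ℚ) γ)) x y
      rw [submatrix_apply, Units.val_one, Matrix.one_apply] at this
      exact this.trans (if_congr (i1_inj h).eq_iff.symm rfl rfl)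
    · rw [hpdef, glMap_bdGL, glMap_bdGL, glMap_dual, glMap_dual, glMap_comp, glMap_comp, int_rat,
        map_one, map_one]
  · rw [mem_Qr_iff h]
    refine ⟨_, GSpP_map zhatToA hq.sim, hq.bt.map zhatToA, ?_⟩
    have h1 := hq.blk2
    rw [inv_mul_cancel, map_one, Units.val_one] at h1
    rw [glMap_coe, submatrix_map, h1]
    exact Matrix.map_one _ (map_zero _) (map_one _)
  · rw [← map_mul, mul_inv_cancel_left]

lemma Hr_to_model (h : r < d) (n : ℕ+) {g : GL (Fin (2 * d)) AQf} (hg : g ∈ HrSet d r n) :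
    ∃ x, emb h n x = g := by
  obtain ⟨⟨g', ⟨⟨⟨g'', c⟩, hc, rfl⟩, hred⟩, rfl⟩, _, ⟨p, ⟨-, hp⟩, rfl⟩, q, hq, hpq⟩ := hg
  change glMap zhatToA g'' = _ at hpq
  change (g'', c) ∈ GSpP d ↥ZHat at hc
  replace hred : glMap (projZHat n) g'' = 1 := hred
  obtain ⟨-, -, hq1, hq2⟩ := (mem_Qr_iff h q).1 hq
  have hpA : BT d r (glMap ratToA p).val := BT.map ratToA hp
  have hmat : (g'' : Matrix (Fin (2 * d)) (Fin (2 * d)) ↥ZHat).map zhatToA =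
      (glMap ratToA p).val *
        q.val := by
    rw [← Units.val_mul, ← hpq]; rfl
  have hbt : BT d r (g'' : Matrix (Fin (2 * d)) (Fin (2 * d)) ↥ZHat) := by
    apply BT.of_map zhatToA zhatToA_inj
    rw [hmat]
    exact hpA.mul hq1
  have h22 := congrArg (fun X => X.submatrix (i2 d r) (i2 d r)) hmat
  simp only [hpA.mul22 h, hq2, mul_one] at h22
  have hentry : ∀ i j, ∃ z : ℤ, (g'' : Matrix (Fin (2 * d)) (Fin (2 * d)) ↥ZHat)
      (i2 d r i) (i2 d r j) = (z : ↥ZHat) := fun i j => zhat_rat (congrFun₂ h22 i j)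
  choose Γ hΓ using hentry
  have hΓm : (g'' : Matrix (Fin (2 * d)) (Fin (2 * d)) ↥ZHat).submatrix (i2 d r) (i2 d r) =
      (Matrix.of Γ).map (Int.castRingHom ↥ZHat) := by
    ext i j : 1
    exact hΓ i j
  have hu : IsUnit (Matrix.of Γ).det := by
    apply zhat_intCast_unit
    change IsUnit ((Int.castRingHom ↥ZHat) (Matrix.of Γ).det)
    rw [RingHom.map_det, RingHom.mapMatrix_apply, ← hΓm, ← Matrix.isUnit_iff_isUnit_det]
    have h1 := hbt.inv.mul22 h (N := (g'' : Matrix (Fin (2 * d)) (Fin (2 * d)) ↥ZHat))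
    have h2 := hbt.mul22 h
      (N := ((g''⁻¹ : GL (Fin (2 * d)) ↥ZHat) : Matrix (Fin (2 * d)) (Fin (2 * d)) ↥ZHat))
    rw [Units.inv_mul, sub_one _ i2_inj] at h1
    rw [Units.mul_inv, sub_one _ i2_inj] at h2
    exact ⟨⟨_, _, h2.symm, h1.symm⟩, rfl⟩
  rw [← Matrix.isUnit_iff_isUnit_det] at hu
  obtain ⟨γ, hγ⟩ := hu
  rw [← hγ] at hΓm
  have hredγ : glMap (Int.castRingHom (ZMod (n : ℕ))) γ = 1 := by
    rw [← glMap_int]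
    apply Units.ext
    rw [glMap_coe, glMap_coe, ← hΓm, ← submatrix_map, ← glMap_coe, hred, Units.val_one,
      Units.val_one]
    exact sub_one _ i2_inj
  exact ⟨⟨(g'', c, γ), ⟨hc, hred, hbt, hredγ, hΓm⟩⟩, rfl⟩

lemma emb_mem_Hr (h : r < d) (n : ℕ+) (x) : emb h n x ∈ HrSet d r n := by
  obtain ⟨p, hp, hpK, q, hq, hqK, he⟩ := emb_dec h n x.2
  exact ⟨x.2.mem_KdA, p, Llr_sub_Pr hp, q, hq, he⟩

lemma one_mem_Nr (h : r < d) : (1 : GL (Fin (2 * d)) AQf) ∈ NrSet d r AQf := by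
  rw [mem_Nr_iff h]
  refine ⟨(GSpP d AQf).one_mem, ?_, ?_, ?_⟩ <;> rw [Units.val_one]
  · exact BT.one
  · exact sub_one _ (i1_inj h)
  · exact sub_one _ i2_inj

lemma one_mem_PrQ : (1 : GL (Fin (2 * d)) AQf) ∈ PrQinA d r :=
  ⟨1, ⟨(GSp d ℚ).one_mem, BT.one⟩, map_one _⟩

lemma part_a (h : r < d) (n : ℕ+) (g : GL (Fin (2 * d)) AQf) :
    g ∈ HrSet d r n ↔ ∃ a ∈ HlrSet d r n, ∃ b ∈ KQrSet d r n, g = a * b := by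
  constructor
  · intro hg
    obtain ⟨x, rfl⟩ := Hr_to_model h n hg
    obtain ⟨p, hp, hpK, q, hq, hqK, he⟩ := emb_dec h n x.2
    exact ⟨p, ⟨hpK, p, hp, 1, one_mem_Nr h, (mul_one p).symm⟩, q, ⟨hqK, hq⟩, he⟩
  · rintro ⟨a, ⟨haK, p, hp, u, hu, rfl⟩, b, ⟨hbK, hb⟩, rfl⟩
    exact ⟨(KdA d n).mul_mem haK hbK, p, Llr_sub_Pr hp, u * b, Qr_mul h (Nr_sub_Qr h hu) hb,
      mul_assoc _ _ _⟩

lemma psi_ker_iff (h : r < d) (n : ℕ+) (x : ↥(Model h n)) :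
    psi h n x = 1 ↔ emb h n x ∈ KNrSet d r n := by
  rw [psi_eq_one_iff]
  obtain ⟨⟨g, c, γ⟩, hx⟩ := x
  rw [mem_Model] at hx
  simp only at hx ⊢
  constructor
  · rintro ⟨rfl, rfl, hB⟩
    refine ⟨hx.mem_KdA, (mem_Nr_iff h _).2 ⟨?_, hx.bt.map zhatToA, ?_, ?_⟩⟩
    · have := GSpP_map zhatToA hx.sim
      rw [map_one] at this
      exact this
    · rw [emb_apply, glMap_coe, submatrix_map, hB]
      exact Matrix.map_one _ (map_zero _) (map_one _)
    · rw [emb_apply, glMap_coe, submatrix_map, hx.blk2, map_one, Units.val_one]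
      exact Matrix.map_one _ (map_zero _) (map_one _)
  · rintro ⟨-, hN⟩
    rw [emb_apply, mem_Nr_iff h] at hN
    obtain ⟨h1, h2, h3, h4⟩ := hN
    simp only at h1 h2 h3 h4
    have hone : ∀ {m : ℕ}, (1 : Matrix (Fin m) (Fin m) ↥ZHat).map zhatToA = 1 :=
      Matrix.map_one _ (map_zero _) (map_one _)
    refine ⟨?_, ?_, ?_⟩
    · apply glMap_inj intMap_inj
      apply Units.ext
      rw [map_one, ← hx.blk2, Units.val_one]
      apply Matrix.map_injective zhatToA_inj
      exact h4.trans hone.symm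
    · have h5 := GSpP_uniq (by omega) h1 (GSpP_map zhatToA hx.sim)
      apply Units.ext
      apply zhatToA_inj
      rw [Units.val_one, map_one]
      exact (congrArg Units.val h5).symm
    · apply Matrix.map_injective zhatToA_inj
      exact h3.trans hone.symm

lemma main_aux (h : r < d) (n : ℕ+) :
    (∀ g : GL (Fin (2 * d)) AQf,
      g ∈ HrSet d r n ↔ ∃ a ∈ HlrSet d r n, ∃ b ∈ KQrSet d r n, g = a * b) ∧
    (∃ H KN : Subgroup (GL (Fin (2 * d)) AQf),
      (H : Set (GL (Fin (2 * d)) AQf)) = HrSet d r n ∧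
      (KN : Set (GL (Fin (2 * d)) AQf)) = KNrSet d r n ∧
      KN ≤ H ∧
      ∃ ψ : ↥H →* (↥(GammaLr (d - r) (n : ℕ)) × ↥(KrP r n)),
        Function.Surjective ψ ∧
        ∀ h : ↥H, (ψ h = 1 ↔ (h : GL (Fin (2 * d)) AQf) ∈ KN)) := by
  have hKN : (((psi h n).ker.map (emb h n) : Subgroup (GL (Fin (2 * d)) AQf)) :
      Set (GL (Fin (2 * d)) AQf)) = KNrSet d r n := by
    apply Set.Subset.antisymm
    · rintro _ ⟨x, hx, rfl⟩
      exact (psi_ker_iff h n x).1 hx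
    · intro g hg
      have hgH : g ∈ HrSet d r n :=
        ⟨hg.1, 1, one_mem_PrQ, g, Nr_sub_Qr h hg.2, (one_mul g).symm⟩
      obtain ⟨x, rfl⟩ := Hr_to_model h n hgH
      exact ⟨x, (psi_ker_iff h n x).2 hg, rfl⟩
  refine ⟨part_a h n, (emb h n).range, (psi h n).ker.map (emb h n), ?_, hKN, ?_, ?_⟩
  · apply Set.Subset.antisymm
    · rintro _ ⟨x, rfl⟩
      exact emb_mem_Hr h n x
    · intro g hg
      exact Hr_to_model h n hg
  · rintro _ ⟨x, -, rfl⟩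
    exact ⟨x, rfl⟩
  · refine ⟨(psi h n).comp (MonoidHom.ofInjective (emb_inj h n)).symm.toMonoidHom, ?_, ?_⟩
    · exact (psi_surj h n).comp (MonoidHom.ofInjective (emb_inj h n)).symm.surjective
    · intro y
      obtain ⟨x, rfl⟩ := (MonoidHom.ofInjective (emb_inj h n)).surjective y
      have h1 : ((psi h n).comp (MonoidHom.ofInjective (emb_inj h n)).symm.toMonoidHom)
          (MonoidHom.ofInjective (emb_inj h n) x) = psi h n x :=
        congrArg (psi h n) ((MonoidHom.ofInjective (emb_inj h n)).symm_apply_apply x)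
      rw [h1, psi_ker_iff, ← SetLike.mem_coe, hKN]
      rfl

end Main

/-- (a) `H_r = H_{ℓ,r}·K_{Q,r}`; (b) `K_{N,r}` is a normal subgroup of `H_r`, and
`H_r/K_{N,r} ≅ Γ_{ℓ,r} × K_r`.  Part (b) is expressed by exhibiting `H_r` and `K_{N,r}` as
subgroups of `GL_{2d}(𝔸_f)` and a surjective group homomorphism `H_r → Γ_{ℓ,r} × K_r` whose
kernel is exactly `K_{N,r}` (so `K_{N,r}` is normal in `H_r` and the quotient is
`Γ_{ℓ,r} × K_r` by the first isomorphism theorem). -/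
theorem Hr_decomposition_and_quotient (d r n : ℕ) (hd : 1 ≤ d) (hr : r ≤ d - 1) (hn : 3 ≤ n) :
    (∀ g : GL (Fin (2 * d)) AQf,
      g ∈ HrSet d r ⟨n, by omega⟩ ↔
        ∃ a ∈ HlrSet d r ⟨n, by omega⟩, ∃ b ∈ KQrSet d r ⟨n, by omega⟩, g = a * b) ∧
    (∃ H KN : Subgroup (GL (Fin (2 * d)) AQf),
      (H : Set (GL (Fin (2 * d)) AQf)) = HrSet d r ⟨n, by omega⟩ ∧
      (KN : Set (GL (Fin (2 * d)) AQf)) = KNrSet d r ⟨n, by omega⟩ ∧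
      KN ≤ H ∧
      ∃ ψ : ↥H →* (↥(GammaLr (d - r) n) × ↥(KrP r ⟨n, by omega⟩)),
        Function.Surjective ψ ∧
        ∀ h : ↥H, (ψ h = 1 ↔ (h : GL (Fin (2 * d)) AQf) ∈ KN)) := by
  have h : r < d := by omega
  exact main_aux h ⟨n, by omega⟩
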